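/- arXiv:0804.2012 — 4 statements merged into one kernel-verified Lean document; each statement's English description precedes it below -/
import Mathlib

section
/- Let O be a discrete valuation ring with field of fractions F and residue field k, and let A be an O-algebra that is free and finitely generated as an O-module such that the F-algebra F ⊗_O A is split semisimple. Then the reduction map A → k ⊗_O A restricts to a map on centers Z(A) → Z(k ⊗_O A) which induces a bijection from the set of primitive idempotents of Z(A) onto the set of primitive idempotents of Z(k ⊗_O A). -/
open scoped TensorProduct
set_option synthInstance.maxHeartbeats 1000000
set_option maxHeartbeats 1000000

/-- A block of a ring: a primitive idempotent of the center, i.e. a nonzero central idempotent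
which cannot be written as a sum of two nonzero orthogonal central idempotents. -/
def IsBlockIdempotent {A : Type*} [Ring A] (e : A) : Prop :=
  e ∈ Subring.center A ∧ IsIdempotentElem e ∧ e ≠ 0 ∧
    ∀ f g : A, f ∈ Subring.center A → g ∈ Subring.center A →
      IsIdempotentElem f → IsIdempotentElem g → f * g = 0 → e = f + g → f = 0 ∨ g = 0

section
open Polynomial

theorem blk_abstract {A B : Type*} [Ring A] [Ring B] (φ : A →+* B) (hs : Function.Surjective φ)
    (h0 : ∀ u : A, u ∈ Subring.center A → IsIdempotentElem u → φ u = 0 → u = 0)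
    (hl : ∀ e : B, e ∈ Subring.center B → IsIdempotentElem e →
      ∃ u : A, u ∈ Subring.center A ∧ IsIdempotentElem u ∧ φ u = e) :
    (∀ z ∈ Subring.center A, φ z ∈ Subring.center B) ∧
    Set.BijOn φ {e : A | IsBlockIdempotent e} {e : B | IsBlockIdempotent e} := by
  have hc : ∀ z ∈ Subring.center A, φ z ∈ Subring.center B := by
    intro z hz
    rw [Subring.mem_center_iff] at hz ⊢
    intro g
    obtain ⟨a, rfl⟩ := hs g
    rw [← map_mul, hz, map_mul]
  have hmul : ∀ e f : A, e ∈ Subring.center A → IsIdempotentElem e →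
      f ∈ Subring.center A → IsIdempotentElem f → IsIdempotentElem (e * f) := by
    intro e f he he' hf hf'
    exact he'.mul_of_commute ((Subring.mem_center_iff.1 hf) e) hf'
  refine ⟨hc, ?_, ?_, ?_⟩
  · rintro e ⟨he, hi, hne, hp⟩
    refine ⟨hc e he, hi.map φ, fun h => hne (h0 e he hi h), ?_⟩
    intro f g hf hg hfi hgi hfg hsum
    obtain ⟨u, hu, hui, rfl⟩ := hl f hf hfi
    have h1 : φ (e * u) = φ u := by
      have : g * φ u = 0 := by rw [← Subring.mem_center_iff.1 hg, hfg]
      rw [map_mul, hsum, add_mul, this, add_zero, hfi.eq]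
    have h2 : e * (1 - u) = e - e * u := by noncomm_ring
    rcases hp (e * u) (e * (1 - u)) (mul_mem he hu)
      (mul_mem he (sub_mem (one_mem _) hu)) (hmul _ _ he hi hu hui)
      (hmul _ _ he hi (sub_mem (one_mem _) hu) hui.one_sub) (by
        have hx : e * u * (e * (1 - u)) = e * (u * e) * (1 - u) := by noncomm_ring
        rw [hx, ← Subring.mem_center_iff.1 hu e, ← mul_assoc, hi.eq, mul_assoc, mul_sub, mul_one,
          hui.eq, sub_self, mul_zero]) (by rw [h2]; abel) with h | h
    · left; rw [← h1, h, map_zero]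
    · right
      have : φ (e - e * u) = 0 := by rw [← h2, h, map_zero]
      rw [map_sub, h1, hsum] at this
      simpa using this
  · have key : ∀ e f : A, IsBlockIdempotent e → IsBlockIdempotent f → φ e = φ f → e = e * f := by
      rintro e f ⟨he, hi, -⟩ ⟨hf, hfi, -⟩ h
      have := h0 (e * (1 - f)) (mul_mem he (sub_mem (one_mem _) hf))
        (hmul _ _ he hi (sub_mem (one_mem _) hf) hfi.one_sub) (by
          rw [map_mul, map_sub, map_one, h, mul_sub, mul_one, (hfi.map φ).eq, sub_self])
      rw [mul_sub, mul_one, sub_eq_zero] at this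
      exact this
    intro e he f hf h
    rw [key e f he hf h, ← Subring.mem_center_iff.1 he.1 f, ← key f e hf he h.symm]
  · rintro e ⟨he, hi, hne, hp⟩
    obtain ⟨u, hu, hui, rfl⟩ := hl e he hi
    refine ⟨u, ⟨hu, hui, fun h => hne (by rw [h, map_zero]), ?_⟩, rfl⟩
    intro f g hf hg hfi hgi hfg hsum
    refine (hp (φ f) (φ g) (hc f hf) (hc g hg) (hfi.map φ) (hgi.map φ)
      (by rw [← map_mul, hfg, map_zero]) (by rw [hsum, map_add])).imp ?_ ?_
    · exact h0 f hf hfi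
    · exact h0 g hg hgi

theorem blk_split_poly
    (O : Type) [CommRing O] [IsDomain O] [IsDiscreteValuationRing O]
    (F : Type) [Field F] [Algebra O F] [IsFractionRing O F]
    (A : Type) [Ring A] [Algebra O A] [Module.Finite O A] [Module.Free O A]
    (hsemisimple : IsSemisimpleRing (F ⊗[O] A))
    (hsplit : ∀ (M : Type) (_ : AddCommGroup M) (_ : Module (F ⊗[O] A) M),
      IsSimpleModule (F ⊗[O] A) M →
        ∀ f : M →ₗ[F ⊗[O] A] M, ∃ c : F, ∀ x : M, f x = algebraMap F (F ⊗[O] A) c • x)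
    (z : A) (hz : z ∈ Subring.center A) :
    ∃ s : Finset O, aeval z (∏ a ∈ s, (X - C a)) = 0 := by
  classical
  obtain ⟨p, hpm, hp⟩ := Algebra.IsIntegral.isIntegral (R := O) z
  refine ⟨p.roots.toFinset, ?_⟩
  set f : O[X] := ∏ a ∈ p.roots.toFinset, (X - C a) with hf
  have hinj : Function.Injective (Algebra.TensorProduct.includeRight : A →ₐ[O] F ⊗[O] A) :=
    Algebra.TensorProduct.includeRight_injective (FaithfulSMul.algebraMap_injective O F)
  set z' : F ⊗[O] A := Algebra.TensorProduct.includeRight z with hz'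
  have hcomm : ∀ b : F ⊗[O] A, z' * b = b * z' := by
    intro b
    induction b with
    | zero => simp
    | add x y hx hy => rw [mul_add, add_mul, hx, hy]
    | tmul x y => simp [hz', Subring.mem_center_iff.1 hz y]
  have hact : ∀ (c : F) (x : F ⊗[O] A), z' * x = c • x → ∀ q : O[X],
      aeval z' q * x = (aeval c q) • x := by
    intro c x hx q
    induction q using Polynomial.induction_on with
    | C a => simp [Algebra.algebraMap_eq_smul_one]
    | add p q hp hq => rw [map_add, map_add, add_mul, add_smul, hp, hq]
    | monomial n a h =>
      have e1 : (C a * X ^ (n + 1) : O[X]) = (C a * X ^ n) * X := by ring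
      rw [e1, map_mul (aeval z') (C a * X ^ n) X, map_mul (aeval c) (C a * X ^ n) X, aeval_X,
        aeval_X, mul_assoc, hx, mul_smul_comm, h, smul_smul,
        mul_comm]
  have hpz : aeval z' p = 0 := by
    rw [hz', aeval_algHom_apply, aeval_def, hp, map_zero]
  apply hinj
  rw [map_zero, ← aeval_algHom_apply, ← hz']
  have hall : ∀ x ∈ sSup {S : Submodule (F ⊗[O] A) (F ⊗[O] A) | IsSimpleModule (F ⊗[O] A) S},
      aeval z' f * x = 0 := by
    intro x hx
    rw [sSup_eq_iSup'] at hx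
    induction hx using Submodule.iSup_induction' with
    | zero => rw [mul_zero]
    | add x y _ _ hx hy => rw [mul_add, hx, hy, add_zero]
    | mem S x hx =>
      obtain ⟨S, hS⟩ := S
      have hS' : IsSimpleModule (F ⊗[O] A) S := hS
      let g : S →ₗ[F ⊗[O] A] S :=
        { toFun := fun x => z' • x
          map_add' := smul_add z'
          map_smul' := fun b x => by
            simp only [RingHom.id_apply, smul_smul, hcomm b] }
      obtain ⟨c, hc⟩ := hsplit S inferInstance inferInstance hS' g
      have hc' : ∀ y ∈ S, z' * y = c • y := by
        intro y hy
        have := congrArg Subtype.val (hc ⟨y, hy⟩)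
        simpa [g, Algebra.smul_def] using this
      have hroot : aeval c p = 0 := by
        have := IsSimpleModule.nontrivial (F ⊗[O] A) S
        obtain ⟨y, hy⟩ := exists_ne (0 : S)
        have h1 := hact c y (hc' y y.2) p
        rw [hpz, zero_mul] at h1
        exact (smul_eq_zero.1 h1.symm).resolve_right (fun h => hy (Subtype.ext h))
      obtain ⟨a, rfl⟩ := IsIntegrallyClosed.isIntegral_iff.1 (⟨p, hpm, hroot⟩ : IsIntegral O c)
      rw [aeval_algebraMap_apply, map_eq_zero_iff _ (FaithfulSMul.algebraMap_injective O F)] at hroot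
      have hmem : a ∈ p.roots.toFinset := by
        simp [hpm.ne_zero, IsRoot, ← hroot, coe_aeval_eq_eval]
      rw [hact _ x (hc' x hx), hf, map_prod, Finset.prod_eq_zero hmem (by simp), zero_smul]
  have h1 := hall 1 (by rw [IsSemisimpleModule.sSup_simples_eq_top]; trivial)
  rwa [mul_one] at h1

theorem blk_lift_poly {O A B : Type*} [CommRing O] [IsLocalRing O] [Ring A] [Algebra O A]
    [Ring B] [Algebra O B] (φ : A →ₐ[O] B)
    (hm : ∀ a ∈ IsLocalRing.maximalIdeal O, ∀ b : B, a • b = 0)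
    (z : A) (hz : z ∈ Subring.center A) (hi : IsIdempotentElem (φ z))
    (s : Finset O) (hs : aeval z (∏ a ∈ s, (X - C a)) = 0) :
    ∃ u : A, u ∈ Subring.center A ∧ IsIdempotentElem u ∧ φ u = φ z := by
  classical
  by_cases h0 : φ z = 0
  · exact ⟨0, zero_mem _, IsIdempotentElem.zero, by rw [map_zero, h0]⟩
  by_cases h1 : φ z = 1
  · exact ⟨1, one_mem _, IsIdempotentElem.one, by rw [map_one, h1]⟩
  set e := φ z with he
  have hev : ∀ q : O[X], aeval e q = q.eval 0 • (1 - e) + q.eval 1 • e := by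
    intro q
    induction q using Polynomial.induction_on with
    | C a => simp [Algebra.algebraMap_eq_smul_one, ← smul_add]
    | add p q hp hq => rw [map_add, hp, hq, eval_add, eval_add, add_smul, add_smul]; abel
    | monomial n a h =>
      simp [hi.pow_succ_eq, Algebra.smul_def]
  set g : O[X] := ∏ a ∈ s with a - 1 ∈ IsLocalRing.maximalIdeal O, (X - C a) with hg
  set h : O[X] := ∏ a ∈ s with ¬ (a - 1 ∈ IsLocalRing.maximalIdeal O), (X - C a) with hh
  have hgh : g * h = ∏ a ∈ s, (X - C a) := Finset.prod_filter_mul_prod_filter_not _ _ _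
  have hu : ∀ x : O, x ∉ IsLocalRing.maximalIdeal O → IsUnit x := fun x hx => by
    simpa [IsLocalRing.mem_maximalIdeal] using hx
  have hcop : IsCoprime g h := by
    refine IsCoprime.prod_left fun a ha => IsCoprime.prod_right fun b hb => ?_
    rw [Finset.mem_filter] at ha hb
    refine isCoprime_X_sub_C_of_isUnit_sub (hu _ fun hab => hb.2 ?_)
    have := Ideal.sub_mem _ ha.2 hab
    rwa [sub_sub_sub_cancel_left] at this
  have hg0 : IsUnit (g.eval 0) := by
    rw [hg, eval_prod, IsUnit.prod_iff]
    intro a ha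
    rw [Finset.mem_filter] at ha
    refine hu _ fun h => ?_
    have := Ideal.add_mem _ ha.2 h
    have h2 : a - 1 + eval 0 (X - C a) = -1 := by simp; ring
    rw [h2, IsLocalRing.mem_maximalIdeal] at this
    exact this isUnit_one.neg
  have hh1 : IsUnit (h.eval 1) := by
    rw [hh, eval_prod, IsUnit.prod_iff]
    intro a ha
    rw [Finset.mem_filter] at ha
    refine hu _ fun h => ha.2 ?_
    have := Ideal.neg_mem_iff _ |>.2 h
    simpa using this
  have hf := hev (g * h)
  rw [hgh, he, aeval_algHom_apply, hs, map_zero, ← hgh, ← he] at hf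
  have hf1 : (g * h).eval 1 • e = 0 := by
    have := congrArg (· * e) hf
    simpa [add_mul, sub_mul, hi.eq] using this.symm
  have hf0 : (g * h).eval 0 • (1 - e) = 0 := by
    rw [hf1, add_zero] at hf
    exact hf.symm
  have hg1 : g.eval 1 ∈ IsLocalRing.maximalIdeal O := by
    by_contra hc
    have : IsUnit ((g * h).eval 1) := by rw [eval_mul]; exact (hu _ hc).mul hh1
    exact h0 (this.smul_eq_zero.1 hf1)
  have hh0 : h.eval 0 ∈ IsLocalRing.maximalIdeal O := by
    by_contra hc
    have : IsUnit ((g * h).eval 0) := by rw [eval_mul]; exact hg0.mul (hu _ hc)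
    exact h1 (sub_eq_zero.1 (this.smul_eq_zero.1 hf0)).symm
  obtain ⟨u, v, huv⟩ := hcop
  refine ⟨aeval z (v * h), ?_, ?_, ?_⟩
  · rw [Subring.mem_center_iff]
    intro b
    have : Commute b z := Subring.mem_center_iff.1 hz b
    generalize v * h = q
    induction q using Polynomial.induction_on with
    | C a => rw [aeval_C]; exact (Algebra.commutes a b).symm
    | add p q hp hq => rw [map_add, mul_add, add_mul, hp, hq]
    | monomial n a h =>
      rw [map_mul, aeval_C, map_pow, aeval_X]
      exact (Commute.mul_right (Algebra.commutes a b).symm (this.pow_right _)).eq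
  · have h3 : v * h * (v * h) = v * h - v * u * (g * h) := by
      linear_combination (v * h) * huv
    rw [IsIdempotentElem, ← map_mul, h3, map_sub, map_mul _ (v * u), hgh, hs, mul_zero, sub_zero]
  · rw [← aeval_algHom_apply, ← he, hev]
    have h4 : (v * h).eval 1 = 1 - (u.eval 1) * g.eval 1 := by
      have := congrArg (eval 1) huv
      simp only [eval_add, eval_mul, eval_one] at this
      rw [eval_mul]; linear_combination this
    rw [h4, hm _ (by rw [eval_mul]; exact Ideal.mul_mem_left _ _ hh0), sub_smul,
      hm _ (Ideal.mul_mem_left _ _ hg1), one_smul, zero_add, sub_zero]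

theorem blk_cen {O A : Type*} [CommRing O] [Ring A] [Algebra O A] (π : O) (e c : A) (n : ℕ)
    (hd : e * e - e = π ^ n • c) (hc : ∀ x, ∃ y, e * x - x * e = π • y) (j : ℕ) (hj : j ≤ n) :
    ∀ x, ∃ y, e * x * (1 - e) = π ^ j • y := by
  induction j with
  | zero => intro x; exact ⟨_, by rw [pow_zero, one_smul]⟩
  | succ j ih =>
    intro x
    obtain ⟨r, rfl⟩ := Nat.exists_eq_add_of_le hj
    obtain ⟨y, hy⟩ := ih (by omega) x
    obtain ⟨y', hy'⟩ := hc y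
    rw [pow_add, mul_smul] at hd
    generalize π ^ r • c = c' at hd
    set d := e * e - e with hdd
    refine ⟨y' * (1 - e) - π ^ j • (y * c') - c' * (x * (1 - e)) - (e + d) * x * c', ?_⟩
    have e1 : π ^ (j + 1) • (y' * (1 - e)) = π ^ j • ((e * y - y * e) * (1 - e)) := by
      rw [hy', pow_succ, mul_smul, smul_mul_assoc]
    have e2 : π ^ (j + 1) • (π ^ j • (y * c')) = π ^ j • (y * d) := by
      rw [hd, smul_comm, mul_smul_comm]
    have e3 : π ^ (j + 1) • (c' * (x * (1 - e))) = d * (x * (1 - e)) := by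
      rw [hd, smul_mul_assoc]
    have e4 : π ^ (j + 1) • ((e + d) * x * c') = (e + d) * x * d := by
      rw [← mul_smul_comm, ← hd]
    rw [smul_sub, smul_sub, smul_sub, e1, e2, e3, e4]
    have e5 : π ^ j • ((e * y - y * e) * (1 - e)) - π ^ j • (y * d)
        = e * (e * x * (1 - e)) * (1 - e) := by
      rw [hy, mul_smul_comm, smul_mul_assoc, ← smul_sub, hdd]
      congr 1
      noncomm_ring
    rw [e5, hdd]
    noncomm_ring

theorem blk_iter {O A : Type*} [CommRing O] [Ring A] [Algebra O A] (π : O) (a : A)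
    (ha : ∃ y, a * a - a = π • y) (m : ℕ) :
    ∃ e t y : A, e = a + π • t ∧ e * e - e = π ^ (m + 1) • y := by
  induction m with
  | zero =>
    obtain ⟨y, hy⟩ := ha
    exact ⟨a, 0, y, by simp, by simpa using hy⟩
  | succ m ih =>
    obtain ⟨e, t, y, he, hy⟩ := ih
    set d := e * e - e with hd
    refine ⟨e + (1 - 2 * e) * d, t + (1 - 2 * e) * (π ^ m • y),
      π ^ m • (y * y * (4 * d - 3)), ?_, ?_⟩
    · rw [smul_add, ← mul_smul_comm, smul_smul, ← pow_succ', ← hy, ← add_assoc, ← he]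
    · have h1 : (e + (1 - 2 * e) * d) * (e + (1 - 2 * e) * d) - (e + (1 - 2 * e) * d)
          = d * d * (4 * d - 3) := by
        rw [hd]; noncomm_ring
      have h2 : d * d = π ^ (m + 1 + 1) • π ^ m • (y * y) := by
        rw [hy, smul_mul_assoc, mul_smul_comm, smul_smul, smul_smul]
        congr 1; ring
      rw [h1, h2, smul_mul_assoc, smul_mul_assoc]

theorem blk_central {O A : Type*} [CommRing O] [IsNoetherianRing O] [Ring A] [Algebra O A]
    [Module.Finite O A] (π : O) (a : A)
    (ha : ∃ y, a * a - a = π • y) (hc : ∀ x, ∃ y, a * x - x * a = π • y) :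
    ∃ w : A, a + π • w ∈ Subring.center A := by
  obtain ⟨N, b, hb⟩ := Module.Finite.exists_fin (R := O) (M := A)
  let ad : A →ₗ[O] (Fin N → A) := LinearMap.pi fun i =>
    LinearMap.mulRight O (b i) - LinearMap.mulLeft O (b i)
  obtain ⟨k, hk⟩ := Ideal.exists_pow_inf_eq_pow_smul (Ideal.span {π}) (LinearMap.range ad)
  obtain ⟨e, t, y, he, hy⟩ := blk_iter π a ha k
  have hce : ∀ x, ∃ y, e * x - x * e = π • y := by
    intro x
    obtain ⟨y, hy⟩ := hc x
    refine ⟨y + t * x - x * t, ?_⟩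
    rw [smul_sub, smul_add, ← hy, he, ← smul_mul_assoc, ← mul_smul_comm]
    noncomm_ring
  have hc1 := blk_cen π e y (k + 1) hy hce (k + 1) le_rfl
  have hc2 := blk_cen π (1 - e) y (k + 1) (by rw [← hy]; noncomm_ring) (by
    intro x
    obtain ⟨y, hy⟩ := hce x
    exact ⟨-y, by rw [smul_neg, ← hy]; noncomm_ring⟩) (k + 1) le_rfl
  have hc3 : ∀ x, ∃ y, e * x - x * e = π ^ (k + 1) • y := by
    intro x
    obtain ⟨y1, h1⟩ := hc1 x
    obtain ⟨y2, h2⟩ := hc2 x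
    refine ⟨y1 - y2, ?_⟩
    rw [smul_sub, ← h1, ← h2]
    noncomm_ring
  choose Y hY using hc3
  have hmem : ad e ∈ (Ideal.span {π} ^ (k + 1) • ⊤ : Submodule O (Fin N → A))
      ⊓ LinearMap.range ad := by
    refine ⟨?_, e, rfl⟩
    have : ad e = π ^ (k + 1) • (fun i => Y (b i)) := by
      funext i
      simp [ad, hY]
    rw [this]
    exact Submodule.smul_mem_smul (Ideal.pow_mem_pow (Ideal.mem_span_singleton_self π) _) trivial
  rw [hk (k + 1) (by omega), Nat.add_sub_cancel_left, pow_one] at hmem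
  have hmem2 : ad e ∈ Ideal.span {π} • LinearMap.range ad :=
    Submodule.smul_mono le_rfl inf_le_right hmem
  rw [Submodule.ideal_span_singleton_smul, Submodule.mem_smul_pointwise_iff_exists] at hmem2
  obtain ⟨_, ⟨w, rfl⟩, hw⟩ := hmem2
  refine ⟨t - w, ?_⟩
  have h5 : a + π • (t - w) = e - π • w := by rw [he, smul_sub]; abel
  rw [h5, Subring.mem_center_iff]
  have h6 : ad (e - π • w) = 0 := by rw [map_sub, map_smul, hw, sub_self]
  generalize e - π • w = z at h6
  intro x
  have hx : x ∈ Submodule.span O (Set.range b) := hb ▸ trivial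
  induction hx using Submodule.span_induction with
  | zero => simp
  | add x y _ _ hx hy => rw [add_mul, mul_add, hx, hy]
  | smul r x _ hx => rw [smul_mul_assoc, mul_smul_comm, hx]
  | mem x hx =>
    obtain ⟨i, rfl⟩ := hx
    have := congrFun h6 i
    simp only [ad, LinearMap.pi_apply, LinearMap.sub_apply, LinearMap.mulRight_apply,
      LinearMap.mulLeft_apply, Pi.zero_apply] at this
    exact (sub_eq_zero.1 this).symm

end

/-- Let `O` be a discrete valuation ring with field of fractions `F` and
residue field `k`, and let `A` be an `O`-algebra, free and finitely generated as an
`O`-module, such that `F ⊗_O A` is split semisimple. Then the reduction map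
`A → k ⊗_O A`, which sends the center `Z(A)` into the center `Z(k ⊗_O A)`, induces a
bijection from the set of primitive idempotents of `Z(A)` (blocks of `A`) onto the set of
primitive idempotents of `Z(k ⊗_O A)` (blocks of `k ⊗_O A`). -/
theorem residue_reduction_bijection_on_blocks
    (O : Type) [CommRing O] [IsDomain O] [IsDiscreteValuationRing O]
    (F : Type) [Field F] [Algebra O F] [IsFractionRing O F]
    (A : Type) [Ring A] [Algebra O A] [Module.Finite O A] [Module.Free O A]
    (hsemisimple : IsSemisimpleRing (F ⊗[O] A))
    (hsplit : ∀ (M : Type) (_ : AddCommGroup M) (_ : Module (F ⊗[O] A) M),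
      IsSimpleModule (F ⊗[O] A) M →
        ∀ f : M →ₗ[F ⊗[O] A] M, ∃ c : F, ∀ x : M, f x = algebraMap F (F ⊗[O] A) c • x) :
    (∀ z ∈ Subring.center A,
      (Algebra.TensorProduct.includeRight z : IsLocalRing.ResidueField O ⊗[O] A)
        ∈ Subring.center (IsLocalRing.ResidueField O ⊗[O] A)) ∧
    Set.BijOn
      (fun a : A =>
        (Algebra.TensorProduct.includeRight a : IsLocalRing.ResidueField O ⊗[O] A))
      {e : A | IsBlockIdempotent e}
      {e : IsLocalRing.ResidueField O ⊗[O] A | IsBlockIdempotent e} := by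
  classical
  obtain ⟨π, hπ⟩ := IsDiscreteValuationRing.exists_irreducible O
  have hmax := hπ.maximalIdeal_eq
  have hm : ∀ a ∈ IsLocalRing.maximalIdeal O, ∀ b : IsLocalRing.ResidueField O ⊗[O] A,
      a • b = 0 := by
    intro a ha b
    have : algebraMap O (IsLocalRing.ResidueField O) a = 0 :=
      (IsLocalRing.residue_eq_zero_iff a).2 ha
    rw [← algebraMap_smul (IsLocalRing.ResidueField O) a b, this, zero_smul]
  have hker : ∀ x : A,
      (Algebra.TensorProduct.includeRight x : IsLocalRing.ResidueField O ⊗[O] A) = 0 →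
      ∃ y, x = π • y := by
    intro x hx
    have h1 := congrArg (TensorProduct.quotTensorEquivQuotSMul A (IsLocalRing.maximalIdeal O)) hx
    replace h1 := h1.trans
      (LinearEquiv.map_zero (TensorProduct.quotTensorEquivQuotSMul A (IsLocalRing.maximalIdeal O)))
    have h2 := TensorProduct.quotTensorEquivQuotSMul_mk_tmul (IsLocalRing.maximalIdeal O) 1 x
    have h3 : (Submodule.Quotient.mk ((1 : O) • x) :
        A ⧸ (IsLocalRing.maximalIdeal O • ⊤ : Submodule O A)) = 0 := h2.symm.trans h1
    rw [one_smul, Submodule.Quotient.mk_eq_zero, hmax, Submodule.ideal_span_singleton_smul,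
      Submodule.mem_smul_pointwise_iff_exists] at h3
    obtain ⟨y, -, hy⟩ := h3
    exact ⟨y, hy.symm⟩
  have hπm : π ∈ IsLocalRing.maximalIdeal O := by
    rw [hmax]; exact Ideal.mem_span_singleton_self π
  let φ : A →ₐ[O] IsLocalRing.ResidueField O ⊗[O] A := Algebra.TensorProduct.includeRight
  have hs : Function.Surjective φ :=
    Algebra.TensorProduct.includeRight_surjective A IsLocalRing.residue_surjective
  refine blk_abstract (φ : A →+* IsLocalRing.ResidueField O ⊗[O] A) hs ?_ ?_
  · intro u hu hui hu0
    obtain ⟨y, hy⟩ := hker u hu0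
    have hN : LinearMap.range (LinearMap.mulLeft O u) = ⊥ := by
      refine Submodule.eq_bot_of_le_smul_of_le_jacobson_bot (IsLocalRing.maximalIdeal O) _
        (IsNoetherian.noetherian _) ?_ (IsLocalRing.maximalIdeal_le_jacobson _)
      rintro _ ⟨x, rfl⟩
      have : LinearMap.mulLeft O u x = π • LinearMap.mulLeft O u (y * x) := by
        rw [LinearMap.mulLeft_apply, LinearMap.mulLeft_apply, ← mul_smul_comm, ← smul_mul_assoc,
          ← hy, ← mul_assoc, hui.eq]
      rw [this]
      exact Submodule.smul_mem_smul hπm ⟨_, rfl⟩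
    have h1 : LinearMap.mulLeft O u 1 ∈ LinearMap.range (LinearMap.mulLeft O u) := ⟨1, rfl⟩
    rw [hN, Submodule.mem_bot] at h1
    simpa using h1
  · intro e he hei
    obtain ⟨a, rfl⟩ := hs e
    obtain ⟨w, hw⟩ := blk_central π a
      (hker _ (by
        change φ (a * a - a) = 0
        rw [map_sub, map_mul, hei.eq, sub_self]))
      (fun x => hker _ (by
        change φ (a * x - x * a) = 0
        rw [map_sub, map_mul, map_mul, Subring.mem_center_iff.1 he, sub_self]))
    have hφ : φ (a + π • w) = φ a := by rw [map_add, map_smul, hm π hπm, add_zero]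
    obtain ⟨s, hs'⟩ := blk_split_poly O F A hsemisimple hsplit _ hw
    obtain ⟨u, hu, hui, hue⟩ := blk_lift_poly φ hm _ hw (by rw [hφ]; exact hei) s hs'
    exact ⟨u, hu, hui, hue.trans hφ⟩
end

section
/- Let d ≥ 1, let m = (m^{(0)}, …, m^{(d−1)}) ∈ ℤ^d be a weight system, and let λ, μ be d-partitions of r. If the m-charged contents of λ and μ are equal as multisets, Contc_λ = Contc_μ, then the m-charged heights of λ and μ are equal, hc_λ = hc_μ. -/
/-- The β-number of a partition `λ = (λ₁ ≥ … ≥ λ_h)` (given as a list), namely the list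
`(λ₁ + h - 1, λ₂ + h - 2, …, λ_h + h - h)`. -/
def betaNumber (l : List ℕ) : List ℕ :=
  l.mapIdx fun i a => a + l.length - (i + 1)

/-- The `m`-shifted sequence `β[m] = (β₁ + m, …, β_h + m, m - 1, m - 2, …, 1, 0)`. -/
def shiftedBeta (β : List ℕ) (m : ℕ) : List ℕ :=
  β.map (· + m) ++ (List.range m).reverse

/-- A list of natural numbers is a partition if it is weakly decreasing and its entries are
positive. -/
def IsPartitionList (l : List ℕ) : Prop :=
  l.Pairwise (· ≥ ·) ∧ ∀ x ∈ l, 0 < x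

/-- A `d`-partition of `r`: a `d`-tuple of partitions whose sizes sum to `r`. -/
def IsMultipartitionOf (d r : ℕ) (lam : Fin d → List ℕ) : Prop :=
  (∀ a, IsPartitionList (lam a)) ∧ (∑ a, (lam a).sum) = r

/-- The `m`-charged height `hc_λ := max_a (h_{λ^{(a)}} - m^{(a)})` of a `d`-partition `λ`
with respect to the weight system `m`. -/
def chargedHeight {d : ℕ} [NeZero d] (m : Fin d → ℤ) (lam : Fin d → List ℕ) : ℤ :=
  Finset.univ.sup' Finset.univ_nonempty fun a => ((lam a).length : ℤ) - m a

/-- The `m`-charged content of a `d`-partition `λ`: the multiset union of the entries of the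
rows `Bc_λ^{(a)} = β_{λ^{(a)}}[hc_λ - hc_λ^{(a)}]` of the `m`-charged standard symbol. -/
def chargedContent {d : ℕ} [NeZero d] (m : Fin d → ℤ) (lam : Fin d → List ℕ) : Multiset ℕ :=
  ∑ a : Fin d,
    (↑(shiftedBeta (betaNumber (lam a))
        ((chargedHeight m lam - (((lam a).length : ℤ) - m a)).toNat)) : Multiset ℕ)

/-- Each row has `hc + m a` entries, so the content has `d * hc + ∑ m a` entries. -/
theorem card_chargedContent {d : ℕ} [NeZero d] (m : Fin d → ℤ) (lam : Fin d → List ℕ) :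
    ((chargedContent m lam).card : ℤ) = d * chargedHeight m lam + ∑ a, m a := by
  have key : ∀ a : Fin d, ((shiftedBeta (betaNumber (lam a))
      ((chargedHeight m lam - (((lam a).length : ℤ) - m a)).toNat)).length : ℤ)
      = chargedHeight m lam + m a := by
    intro a
    have hle : ((lam a).length : ℤ) - m a ≤ chargedHeight m lam :=
      Finset.le_sup' (fun a => ((lam a).length : ℤ) - m a) (Finset.mem_univ a)
    simp only [shiftedBeta, betaNumber, List.length_append, List.length_map,
      List.length_mapIdx, List.length_reverse, List.length_range]
    omega
  rw [chargedContent, Multiset.card_sum]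
  simp only [Multiset.coe_card]
  rw [Nat.cast_sum, Finset.sum_congr rfl fun a _ => key a, Finset.sum_add_distrib]
  simp

/-- Let `d ≥ 1`, let `m ∈ ℤ^d` be a weight system and let `λ, μ` be
`d`-partitions of `r`. If the `m`-charged contents of `λ` and `μ` are equal as multisets,
then the `m`-charged heights of `λ` and `μ` are equal. -/
theorem chargedHeight_eq_of_chargedContent_eq (d r : ℕ) [NeZero d] (m : Fin d → ℤ)
    (lam mu : Fin d → List ℕ)
    (hlam : IsMultipartitionOf d r lam) (hmu : IsMultipartitionOf d r mu)
    (h : chargedContent m lam = chargedContent m mu) :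
    chargedHeight m lam = chargedHeight m mu := by
  have h1 := card_chargedContent m lam
  rw [h, card_chargedContent m mu] at h1
  have hd : (d : ℤ) ≠ 0 := by exact_mod_cast NeZero.ne d
  exact (mul_left_cancel₀ hd (add_right_cancel h1)).symm
end

section
/- Let d ≥ 2, let m = (m^{(0)}, …, m^{(d−1)}) ∈ ℤ^d be a weight system, and let λ, μ be d-partitions of r with λ ∼_C μ. Then the m-charged contents of λ and μ are equal as multisets: Contc_λ = Contc_μ. -/
/-- The relation `λ ∼_C μ` on `d`-partitions: there are `s < t` such that `λ` and `μ` agree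
away from `s, t`, and the 2-partitions `(λ^{(s)}, λ^{(t)})` and `(μ^{(s)}, μ^{(t)})` have the
same charged content with respect to the weight system `(m^{(s)}, m^{(t)})`. -/
def SimC {d : ℕ} [NeZero d] (m : Fin d → ℤ) (lam mu : Fin d → List ℕ) : Prop :=
  ∃ s t : Fin d, s < t ∧ (∀ a, a ≠ s → a ≠ t → lam a = mu a) ∧
    chargedContent ![m s, m t] ![lam s, lam t] = chargedContent ![m s, m t] ![mu s, mu t]

theorem shiftedBeta_add (β : List ℕ) (n k : ℕ) :
    (↑(shiftedBeta β (n + k)) : Multiset ℕ)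
      = (↑(shiftedBeta β n) : Multiset ℕ).map (· + k) + Multiset.range k := by
  have h : (List.range (n + k)).Perm ((List.range n).map (· + k) ++ List.range k) := by
    rw [Nat.add_comm n k, List.range_add]
    refine List.perm_append_comm.trans ?_
    simp [Nat.add_comm]
  rw [← Multiset.coe_range, Multiset.map_coe, Multiset.coe_add, Multiset.coe_eq_coe]
  unfold shiftedBeta
  rw [List.map_append, List.map_map, List.append_assoc]
  have e : ((fun x => x + k) ∘ fun x => x + n) = fun x : ℕ => x + (n + k) := by
    funext x; simp [Nat.add_assoc]
  rw [e]
  refine List.Perm.append_left _ ?_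
  refine (List.reverse_perm _).trans (h.trans ?_)
  exact List.Perm.append_right _ (List.Perm.map _ (List.reverse_perm _).symm)

/-- A row of the symbol at common height `N`. -/
def rowC (N m : ℤ) (l : List ℕ) : Multiset ℕ :=
  (↑(shiftedBeta (betaNumber l) ((N - ((l.length : ℤ) - m)).toNat)) : Multiset ℕ)

theorem rowC_add {N m : ℤ} {l : List ℕ} (h : (l.length : ℤ) - m ≤ N) (k : ℕ) :
    rowC (N + k) m l = (rowC N m l).map (· + k) + Multiset.range k := by
  unfold rowC
  rw [← shiftedBeta_add]
  congr 3
  omega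

theorem rowC_card {N m : ℤ} {l : List ℕ} (h : (l.length : ℤ) - m ≤ N) :
    ((rowC N m l).card : ℤ) = N + m := by
  simp only [rowC, shiftedBeta, betaNumber, Multiset.coe_card, List.length_append,
    List.length_map, List.length_mapIdx, List.length_reverse, List.length_range]
  omega

theorem chargedHeight_le_iff {d : ℕ} [NeZero d] (m : Fin d → ℤ) (lam : Fin d → List ℕ) (x : ℤ) :
    chargedHeight m lam ≤ x ↔ ∀ a, ((lam a).length : ℤ) - m a ≤ x := by
  simp [chargedHeight, Finset.sup'_le_iff]

theorem chargedContent_eq_rowC {d : ℕ} [NeZero d] (m : Fin d → ℤ) (lam : Fin d → List ℕ) :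
    chargedContent m lam = ∑ a, rowC (chargedHeight m lam) (m a) (lam a) := rfl

/-- Let `d ≥ 2`, let `m ∈ ℤ^d` be a weight system, and let `λ, μ` be
`d`-partitions of `r` with `λ ∼_C μ`. Then the `m`-charged contents of `λ` and `μ` are equal
as multisets. -/
theorem chargedContent_eq_of_simC (d r : ℕ) (hd : 2 ≤ d) [NeZero d] (m : Fin d → ℤ)
    (lam mu : Fin d → List ℕ)
    (hlam : IsMultipartitionOf d r lam) (hmu : IsMultipartitionOf d r mu)
    (h : SimC m lam mu) :
    chargedContent m lam = chargedContent m mu := by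
  obtain ⟨s, t, hst, hag, hc⟩ := h
  have l1 := chargedHeight_le_iff ![m s, m t] ![lam s, lam t]
  have l2 := chargedHeight_le_iff ![m s, m t] ![mu s, mu t]
  rw [chargedContent_eq_rowC, chargedContent_eq_rowC] at hc
  simp only [Fin.sum_univ_two, Fin.forall_fin_two, Matrix.cons_val_zero, Matrix.cons_val_one]
    at hc l1 l2
  generalize chargedHeight ![m s, m t] ![lam s, lam t] = H at *
  generalize chargedHeight ![m s, m t] ![mu s, mu t] = H' at *
  obtain ⟨a1, a2⟩ := (l1 H).1 le_rfl
  obtain ⟨b1, b2⟩ := (l2 H').1 le_rfl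
  have hH : H = H' := by
    have := congrArg (fun x : Multiset ℕ => (x.card : ℤ)) hc
    simp only [Multiset.card_add, Nat.cast_add, rowC_card a1, rowC_card a2, rowC_card b1,
      rowC_card b2] at this
    omega
  subst hH
  have key : ∀ x, chargedHeight m lam ≤ x → chargedHeight m mu ≤ x := by
    intro x hx
    rw [chargedHeight_le_iff] at hx ⊢
    have := (l2 x).1 ((l1 x).2 ⟨hx s, hx t⟩)
    intro a
    by_cases as : a = s
    · subst as; exact this.1
    by_cases at' : a = t
    · subst at'; exact this.2
    rw [← hag a as at']; exact hx a
  have key2 : ∀ x, chargedHeight m mu ≤ x → chargedHeight m lam ≤ x := by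
    intro x hx
    rw [chargedHeight_le_iff] at hx ⊢
    have := (l1 x).1 ((l2 x).2 ⟨hx s, hx t⟩)
    intro a
    by_cases as : a = s
    · subst as; exact this.1
    by_cases at' : a = t
    · subst at'; exact this.2
    rw [hag a as at']; exact hx a
  have hN : chargedHeight m lam = chargedHeight m mu :=
    le_antisymm (key2 _ le_rfl) (key _ le_rfl)
  have hHN : H ≤ chargedHeight m lam := by
    have := (chargedHeight_le_iff m lam _).1 le_rfl
    exact (l1 _).2 ⟨this s, this t⟩
  rw [chargedContent_eq_rowC, chargedContent_eq_rowC, ← hN]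
  obtain ⟨k, hk⟩ := Int.le.dest hHN
  rw [← hk]
  have ht : t ∈ Finset.univ.erase s := by simp [hst.ne']
  have split : ∀ f : Fin d → Multiset ℕ,
      ∑ a, f a = (f s + f t) + ∑ a ∈ (Finset.univ.erase s).erase t, f a := by
    intro f
    rw [← Finset.add_sum_erase _ f (Finset.mem_univ s), ← Finset.add_sum_erase _ f ht, add_assoc]
  rw [split, split]
  congr 1
  · rw [rowC_add a1, rowC_add a2, rowC_add b1, rowC_add b2, add_add_add_comm,
      ← Multiset.map_add, hc, Multiset.map_add, add_add_add_comm]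
  · refine Finset.sum_congr rfl fun a ha => ?_
    simp only [Finset.mem_erase] at ha
    rw [hag a ha.2.1 ha.1]
end

section
/- Let d ≥ 2, let m = (m^{(0)}, …, m^{(d−1)}) ∈ ℤ^d be a weight system, and let λ, μ be d-partitions of r. Then Contc_λ = Contc_μ as multisets (with respect to m) if and only if there exists a finite sequence λ_(0), λ_(1), …, λ_(n) of d-partitions of r such that λ_(0) = λ, λ_(n) = μ, and λ_(i−1) ∼_C λ_(i) for all 1 ≤ i ≤ n. -/
/-- Row with `k` entries attached to a partition. -/
def rowL (k : ℕ) (l : List ℕ) : List ℕ := shiftedBeta (betaNumber l) (k - l.length)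

theorem betaNumber_cons (x : ℕ) (xs : List ℕ) :
    betaNumber (x :: xs) = (x + xs.length) :: betaNumber xs := by
  unfold betaNumber
  rw [List.mapIdx_cons]
  congr 1
  apply List.ext_getElem
  · simp
  · intro i h1 h2
    simp
    omega

theorem rowL_nil (k : ℕ) : rowL k [] = (List.range k).reverse := by
  simp [rowL, shiftedBeta, betaNumber]

theorem rowL_cons (k x : ℕ) (xs : List ℕ) (h : xs.length ≤ k) :
    rowL (k + 1) (x :: xs) = (x + k) :: rowL k xs := by
  simp only [rowL, betaNumber_cons, shiftedBeta, List.length_cons, List.map_cons, List.cons_append]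
  have h1 : k + 1 - (xs.length + 1) = k - xs.length := by omega
  rw [h1]
  congr 1
  omega

theorem rowL_succ_nil (k : ℕ) : rowL (k + 1) [] = k :: rowL k [] := by
  simp [rowL_nil, List.range_succ]

theorem rowL_length (k : ℕ) (l : List ℕ) (h : l.length ≤ k) : (rowL k l).length = k := by
  simp [rowL, shiftedBeta, betaNumber]; omega

theorem rowL_sum (k : ℕ) (l : List ℕ) (h : l.length ≤ k) :
    (rowL k l).sum = l.sum + (rowL k []).sum := by
  induction l generalizing k with
  | nil => simp
  | cons x xs ih =>
    obtain _ | k := k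
    · simp at h
    · have h' : xs.length ≤ k := by simpa using h
      rw [rowL_cons k x xs h', rowL_succ_nil, List.sum_cons, List.sum_cons, List.sum_cons, ih k h']
      omega

theorem rowL_shift (k : ℕ) (l : List ℕ) (h : l.length ≤ k) :
    ((rowL (k + 1) l : List ℕ) : Multiset ℕ) = Multiset.map (· + 1) (rowL k l : Multiset ℕ) + {0} := by
  induction l generalizing k with
  | nil =>
    rw [rowL_nil, rowL_nil, List.range_succ_eq_map]
    simp only [List.reverse_cons, Multiset.map_coe, ← Multiset.coe_singleton, Multiset.coe_add]
    simp [List.map_reverse]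
  | cons x xs ih =>
    obtain _ | k := k
    · simp at h
    · have h' : xs.length ≤ k := by simpa using h
      rw [rowL_cons k x xs h', rowL_cons (k+1) x xs (by omega), ← Multiset.cons_coe, ih k h',
        ← Multiset.cons_coe, Multiset.map_cons, Multiset.cons_add]
      rfl

theorem rowL_pos (l : List ℕ) (h : ∀ x ∈ l, 0 < x) : 0 ∉ rowL l.length l := by
  induction l with
  | nil => simp [rowL_nil]
  | cons x xs ih =>
    rw [List.length_cons, rowL_cons _ _ _ le_rfl]
    simp only [List.mem_cons, not_or]
    refine ⟨?_, ih fun y hy => h y (by simp [hy])⟩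
    have := h x (by simp)
    omega

theorem rowL_count_zero (k : ℕ) (l : List ℕ) (h : ∀ x ∈ l, 0 < x) (hk : l.length ≤ k) :
    Multiset.count 0 (rowL k l : Multiset ℕ) = if l.length < k then 1 else 0 := by
  split_ifs with hh
  · obtain _ | k := k
    · omega
    · rw [rowL_shift k l (by omega)]
      simp [Multiset.count_eq_zero]
  · have : k = l.length := by omega
    subst this
    rw [Multiset.count_eq_zero]
    simpa using rowL_pos l h

theorem rowL_bound (k : ℕ) (l : List ℕ) (M : ℕ) (h : ∀ x ∈ l, x ≤ M) (hk : l.length ≤ k) :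
    ∀ y ∈ rowL k l, y < M + k := by
  induction l generalizing k with
  | nil => intro y hy; simp [rowL_nil] at hy; omega
  | cons x xs ih =>
    obtain _ | k := k
    · simp at hk
    · have h' : xs.length ≤ k := by simpa using hk
      rw [rowL_cons k x xs h']
      intro y hy
      rcases List.mem_cons.1 hy with rfl | hy
      · have := h x (by simp); omega
      · have := ih k (fun z hz => h z (by simp [hz])) h' y hy; omega

theorem IsPartitionList.tail {x : ℕ} {xs : List ℕ} (h : IsPartitionList (x :: xs)) :
    IsPartitionList xs :=
  ⟨(List.pairwise_cons.1 h.1).2, fun y hy => h.2 y (by simp [hy])⟩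

theorem rowL_sorted (k : ℕ) (l : List ℕ) (h : IsPartitionList l) (hk : l.length ≤ k) :
    (rowL k l).Pairwise (· > ·) := by
  induction l generalizing k with
  | nil =>
    rw [rowL_nil, List.pairwise_reverse]
    simpa using List.pairwise_lt_range
  | cons x xs ih =>
    obtain _ | k := k
    · simp at hk
    · have h' : xs.length ≤ k := by simpa using hk
      rw [rowL_cons k x xs h', List.pairwise_cons]
      exact ⟨rowL_bound k xs x (List.pairwise_cons.1 h.1).1 h', ih k h.tail h'⟩

theorem rowL_inj_list (k : ℕ) (l l' : List ℕ) (h : IsPartitionList l) (h' : IsPartitionList l')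
    (hk : l.length ≤ k) (hk' : l'.length ≤ k) (e : rowL k l = rowL k l') : l = l' := by
  induction k generalizing l l' with
  | zero =>
    rw [List.length_eq_zero_iff.1 (Nat.le_zero.1 hk), List.length_eq_zero_iff.1 (Nat.le_zero.1 hk')]
  | succ k ih =>
    rcases l with _ | ⟨x, xs⟩ <;> rcases l' with _ | ⟨y, ys⟩
    · rfl
    · rw [rowL_succ_nil, rowL_cons _ _ _ (by simpa using hk')] at e
      have := h'.2 y (by simp)
      have := (List.cons.inj e).1
      omega
    · rw [rowL_succ_nil, rowL_cons _ _ _ (by simpa using hk)] at e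
      have := h.2 x (by simp)
      have := (List.cons.inj e).1
      omega
    · rw [rowL_cons _ _ _ (by simpa using hk), rowL_cons _ _ _ (by simpa using hk')] at e
      obtain ⟨e1, e2⟩ := List.cons.inj e
      rw [ih xs ys h.tail h'.tail (by simpa using hk) (by simpa using hk') e2]
      congr 1
      omega

theorem rowL_inj (k : ℕ) (l l' : List ℕ) (h : IsPartitionList l) (h' : IsPartitionList l')
    (hk : l.length ≤ k) (hk' : l'.length ≤ k)
    (e : (rowL k l : Multiset ℕ) = (rowL k l' : Multiset ℕ)) : l = l' := by
  apply rowL_inj_list k l l' h h' hk hk'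
  exact (Multiset.coe_eq_coe.1 e).eq_of_pairwise (fun a b _ _ h1 h2 => by omega)
    (rowL_sorted k l h hk) (rowL_sorted k l' h' hk')

theorem rowL_surj_list (k : ℕ) (L : List ℕ) (hL : L.Pairwise (· > ·)) (hk : L.length = k) :
    ∃ l, IsPartitionList l ∧ l.length ≤ k ∧ rowL k l = L := by
  induction k generalizing L with
  | zero =>
    rw [List.length_eq_zero_iff] at hk
    subst hk
    exact ⟨[], by simp [IsPartitionList], by simp, by simp [rowL_nil]⟩
  | succ k ih =>
    rcases L with _ | ⟨y, L⟩
    · simp at hk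
    · rw [List.pairwise_cons] at hL
      obtain ⟨l, hl, hlk, rfl⟩ := ih L hL.2 (by simpa using hk)
      have key : ∀ x ∈ l, x + k ≤ y := by
        rcases l with _ | ⟨x, xs⟩
        · simp
        · obtain _ | k := k
          · simp at hlk
          · rw [rowL_cons _ _ _ (by simpa using hlk)] at hL
            have h1 := hL.1 (x + k) (by simp)
            have h2 := (List.pairwise_cons.1 hl.1).1
            intro z hz
            rcases List.mem_cons.1 hz with rfl | hz
            · omega
            · have := h2 z hz
              omega
      by_cases hy : y ≤ k
      · have hnil : l = [] := by
          rcases l with _ | ⟨x, xs⟩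
          · rfl
          · have := key x (by simp)
            have := hl.2 x (by simp)
            omega
        subst hnil
        have hyk : y = k := by
          obtain _ | k := k
          · omega
          · rw [rowL_succ_nil] at hL
            have := hL.1 k (by simp)
            omega
        subst hyk
        exact ⟨[], hl, by simp, rowL_succ_nil y⟩
      · refine ⟨(y - k) :: l, ⟨List.pairwise_cons.2 ⟨fun z hz => ?_, hl.1⟩, ?_⟩, by simpa using hlk, ?_⟩
        · have := key z hz
          omega
        · intro z hz
          rcases List.mem_cons.1 hz with rfl | hz
          · omega
          · exact hl.2 z hz
        · rw [rowL_cons _ _ _ hlk]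
          congr 1
          omega

theorem rowL_surj (k : ℕ) (A : Finset ℕ) (hA : A.card = k) :
    ∃ l, IsPartitionList l ∧ l.length ≤ k ∧ (rowL k l : Multiset ℕ) = A.val := by
  obtain ⟨l, h1, h2, h3⟩ := rowL_surj_list k (A.sort (· ≥ ·))
    (by simpa using (Finset.sortedGT_sort A).pairwise) (by simp [hA])
  refine ⟨l, h1, h2, ?_⟩
  rw [h3, Finset.sort_eq]

/-! Combinatorial part -/

theorem sum_two_change {ι M : Type*} [DecidableEq ι] [AddCommMonoid M] (S : Finset ι)
    (f g : ι → M) (s t : ι) (hst : s ≠ t) (hs : s ∈ S) (ht : t ∈ S)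
    (h : ∀ a, a ≠ s → a ≠ t → f a = g a) (e : f s + f t = g s + g t) :
    ∑ a ∈ S, f a = ∑ a ∈ S, g a := by
  have ht' : t ∈ S.erase s := Finset.mem_erase.2 ⟨hst.symm, ht⟩
  rw [← Finset.add_sum_erase S f hs, ← Finset.add_sum_erase S g hs,
    ← Finset.add_sum_erase _ f ht', ← Finset.add_sum_erase _ g ht', ← add_assoc, ← add_assoc, e]
  congr 1
  apply Finset.sum_congr rfl
  intro a ha
  simp only [Finset.mem_erase] at ha
  exact h a ha.2.1 ha.1

/-- A two-row move. -/
def RowStep {ι : Type*} (A A' : ι → Finset ℕ) : Prop :=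
  ∃ s t, s ≠ t ∧ (∀ a, a ≠ s → a ≠ t → A a = A' a) ∧
    (A s).val + (A t).val = (A' s).val + (A' t).val ∧ ∀ a, (A a).card = (A' a).card

theorem RowStep.symm {ι : Type*} {A A' : ι → Finset ℕ} (h : RowStep A A') : RowStep A' A := by
  obtain ⟨s, t, h1, h2, h3, h4⟩ := h
  exact ⟨s, t, h1, fun a h h' => (h2 a h h').symm, h3.symm, fun a => (h4 a).symm⟩

theorem exists_rowSwap {ι : Type*} [DecidableEq ι] (S : Finset ι) (A : ι → Finset ℕ) (a : ι)
    (ha : a ∈ S) (x y : ℕ) (hx : x ∈ A a) (hy : y ∉ A a)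
    (hc : (∑ b ∈ S, (A b).val).count x ≤ (∑ b ∈ S, (A b).val).count y) :
    ∃ A', RowStep A A' ∧ (∀ b ∉ S, A b = A' b) ∧
      ∑ b ∈ S, (A b).val = ∑ b ∈ S, (A' b).val ∧ A' a = insert y ((A a).erase x) := by
  have hex : ∃ t ∈ S, y ∈ A t ∧ x ∉ A t := by
    by_contra hcon
    push Not at hcon
    rw [Multiset.count_sum', Multiset.count_sum'] at hc
    refine absurd hc (not_le.2 (Finset.sum_lt_sum ?_ ⟨a, ha, ?_⟩))
    · intro b hb
      by_cases hyb : y ∈ A b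
      · rw [Multiset.count_eq_one_of_mem (A b).nodup hyb,
          Multiset.count_eq_one_of_mem (A b).nodup (hcon b hb hyb)]
      · rw [Multiset.count_eq_zero_of_notMem hyb]
        exact Nat.zero_le _
    · rw [Multiset.count_eq_zero_of_notMem hy, Multiset.count_eq_one_of_mem (A a).nodup hx]
      exact Nat.one_pos
  obtain ⟨t, ht, hyt, hxt⟩ := hex
  have hat : a ≠ t := by rintro rfl; exact hy hyt
  have hval : ∀ (C : Finset ℕ) (u v : ℕ), u ∈ C → v ∉ C →
      (insert v (C.erase u)).val + {u} = C.val + {v} := by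
    intro C u v hu hv
    rw [Finset.insert_val_of_notMem (fun h => hv (Finset.mem_of_mem_erase h)), Finset.erase_val,
      Multiset.cons_add, ← Multiset.singleton_add v, add_comm _ ({u} : Multiset ℕ),
      Multiset.singleton_add u, Multiset.cons_erase hu, add_comm]
  have hcard : ∀ (C : Finset ℕ) (u v : ℕ), u ∈ C → v ∉ C →
      (C).card = (insert v (C.erase u)).card := by
    intro C u v hu hv
    have := congrArg Multiset.card (hval C u v hu hv)
    simp only [Multiset.card_add, Multiset.card_singleton, Finset.card_val] at this
    omega
  set A' : ι → Finset ℕ := Function.update (Function.update A a (insert y ((A a).erase x))) t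
    (insert x ((A t).erase y)) with hA'
  have e1 : A' a = insert y ((A a).erase x) := by simp [hA', hat]
  have e2 : A' t = insert x ((A t).erase y) := by simp [hA']
  have e3 : ∀ b, b ≠ a → b ≠ t → A b = A' b := by
    intro b h1 h2
    simp [hA', h1, h2]
  have e4 : (A a).val + (A t).val = (A' a).val + (A' t).val := by
    have h1 := hval (A a) x y hx hy
    have h2 := hval (A t) y x hyt hxt
    rw [← e1] at h1
    rw [← e2] at h2
    apply add_right_cancel (b := ({x} : Multiset ℕ) + {y})
    calc (A a).val + (A t).val + ({x} + {y}) = ((A a).val + {y}) + ((A t).val + {x}) := by abel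
      _ = ((A' a).val + {x}) + ((A' t).val + {y}) := by rw [h1, h2]
      _ = _ := by abel
  refine ⟨A', ⟨a, t, hat, e3, e4, ?_⟩, ?_, ?_, e1⟩
  · intro b
    by_cases h1 : b = a
    · subst h1; rw [e1]; exact hcard _ _ _ hx hy
    · by_cases h2 : b = t
      · subst h2; rw [e2]; exact hcard _ _ _ hyt hxt
      · rw [e3 b h1 h2]
  · intro b hb
    exact e3 b (by rintro rfl; exact hb ha) (by rintro rfl; exact hb ht)
  · exact sum_two_change S _ _ a t hat ha ht (fun b h1 h2 => by rw [e3 b h1 h2]) e4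

theorem rowStep_connected {ι : Type*} [DecidableEq ι] (S : Finset ι) (A B : ι → Finset ℕ)
    (hS : ∀ b ∉ S, A b = B b) (hcard : ∀ b, (A b).card = (B b).card)
    (hsum : ∑ b ∈ S, (A b).val = ∑ b ∈ S, (B b).val) :
    Relation.ReflTransGen RowStep A B := by
  induction S using Finset.induction_on generalizing A B with
  | empty =>
    have : A = B := funext fun b => hS b (by simp)
    rw [this]
  | insert a S haS ih =>
    have main : ∀ n : ℕ, ∀ A B : ι → Finset ℕ, (A a \ B a).card = n →
        (∀ b ∉ insert a S, A b = B b) → (∀ b, (A b).card = (B b).card) →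
        (∑ b ∈ insert a S, (A b).val = ∑ b ∈ insert a S, (B b).val) →
        Relation.ReflTransGen RowStep A B := by
      intro n
      induction n with
      | zero =>
        intro A B hn hS hcard hsum
        have hab : A a = B a := Finset.eq_of_subset_of_card_le
          (Finset.sdiff_eq_empty_iff_subset.1 (Finset.card_eq_zero.1 hn)) (hcard a).ge
        apply ih A B _ hcard
        · rw [Finset.sum_insert haS, Finset.sum_insert haS, hab] at hsum
          exact add_left_cancel hsum
        · intro b hb
          by_cases h : b = a
          · rw [h, hab]
          · exact hS b (by simp [h, hb])
      | succ n ihn =>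
        intro A B hn hS hcard hsum
        obtain ⟨x, hx⟩ := Finset.card_pos.1 (by omega : 0 < (A a \ B a).card)
        have hn' : (B a \ A a).card = n + 1 := by
          rw [← hn]; exact (Finset.card_sdiff_comm (hcard a)).symm
        obtain ⟨y, hy⟩ := Finset.card_pos.1 (by omega : 0 < (B a \ A a).card)
        rw [Finset.mem_sdiff] at hx hy
        rcases le_total ((∑ b ∈ insert a S, (A b).val).count x)
          ((∑ b ∈ insert a S, (A b).val).count y) with hc | hc
        · obtain ⟨A', h1, h2, h3, h4⟩ := exists_rowSwap (insert a S) A a (by simp) x y hx.1 hy.2 hc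
          refine Relation.ReflTransGen.head h1 (ihn A' B ?_ ?_ ?_ ?_)
          · have : A' a \ B a = (A a \ B a).erase x := by
              rw [h4]; ext z
              simp only [Finset.mem_sdiff, Finset.mem_insert, Finset.mem_erase]
              grind
            rw [this, Finset.card_erase_of_mem (Finset.mem_sdiff.2 hx)]
            omega
          · intro b hb
            rw [← h2 b hb, hS b hb]
          · obtain ⟨_, _, _, _, _, h5⟩ := h1
            intro b
            rw [← h5 b, hcard b]
          · rw [← h3, hsum]
        · rw [hsum] at hc
          obtain ⟨B', h1, h2, h3, h4⟩ := exists_rowSwap (insert a S) B a (by simp) y x hy.1 hx.2 hc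
          refine Relation.ReflTransGen.tail (ihn A B' ?_ ?_ ?_ ?_) h1.symm
          · have : A a \ B' a = (A a \ B a).erase x := by
              rw [h4]; ext z
              simp only [Finset.mem_sdiff, Finset.mem_insert, Finset.mem_erase]
              grind
            rw [this, Finset.card_erase_of_mem (Finset.mem_sdiff.2 hx)]
            omega
          · intro b hb
            rw [← h2 b hb, hS b hb]
          · obtain ⟨_, _, _, _, _, h5⟩ := h1
            intro b
            rw [← h5 b, hcard b]
          · rw [← h3, hsum]
    exact main _ A B rfl hS hcard hsum

/-! Contents at arbitrary level -/

/-- Content at level `N`. -/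
def contN {d : ℕ} (m : Fin d → ℤ) (N : ℤ) (lam : Fin d → List ℕ) : Multiset ℕ :=
  ∑ a : Fin d, (rowL (N + m a).toNat (lam a) : Multiset ℕ)

theorem chargedContent_eq {d : ℕ} [NeZero d] (m : Fin d → ℤ) (lam : Fin d → List ℕ) :
    chargedContent m lam = contN m (chargedHeight m lam) lam := by
  unfold chargedContent contN rowL
  apply Finset.sum_congr rfl
  intro a _
  congr 3
  omega

theorem le_chargedHeight {d : ℕ} [NeZero d] (m : Fin d → ℤ) (lam : Fin d → List ℕ) (a : Fin d) :
    ((lam a).length : ℤ) ≤ chargedHeight m lam + m a := by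
  have : ((lam a).length : ℤ) - m a ≤ chargedHeight m lam :=
    Finset.le_sup' (fun a => ((lam a).length : ℤ) - m a) (Finset.mem_univ a)
  omega

theorem chargedHeight_le {d : ℕ} [NeZero d] (m : Fin d → ℤ) (lam : Fin d → List ℕ) (N : ℤ)
    (h : ∀ a, ((lam a).length : ℤ) ≤ N + m a) : chargedHeight m lam ≤ N :=
  Finset.sup'_le _ _ fun a _ => by have := h a; omega

theorem contN_succ {d : ℕ} (m : Fin d → ℤ) (N : ℤ) (lam : Fin d → List ℕ)
    (h : ∀ a, ((lam a).length : ℤ) ≤ N + m a) :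
    contN m (N + 1) lam = Multiset.map (· + 1) (contN m N lam) + d • {0} := by
  unfold contN
  have : ∀ a : Fin d, (rowL (N + 1 + m a).toNat (lam a) : Multiset ℕ) =
      Multiset.mapAddMonoidHom (· + 1) (rowL (N + m a).toNat (lam a) : Multiset ℕ) + {0} := by
    intro a
    have h1 := h a
    have h2 : (N + 1 + m a).toNat = (N + m a).toNat + 1 := by omega
    rw [h2, rowL_shift _ _ (by omega)]
    rfl
  rw [Finset.sum_congr rfl fun a _ => this a, Finset.sum_add_distrib, ← map_sum, Finset.sum_const, Finset.card_univ, Fintype.card_fin]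
  rfl

theorem contN_add_iff {d : ℕ} (m : Fin d → ℤ) (N : ℤ) (lam mu : Fin d → List ℕ)
    (h : ∀ a, ((lam a).length : ℤ) ≤ N + m a) (h' : ∀ a, ((mu a).length : ℤ) ≤ N + m a) (n : ℕ) :
    contN m (N + n) lam = contN m (N + n) mu ↔ contN m N lam = contN m N mu := by
  induction n with
  | zero => simp
  | succ n ih =>
    rw [← ih]
    push_cast
    rw [← add_assoc, contN_succ _ _ _ (fun a => by have := h a; omega),
      contN_succ _ _ _ (fun a => by have := h' a; omega), add_left_inj]
    exact (Multiset.map_injective (add_left_injective 1)).eq_iff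

theorem contN_le_iff {d : ℕ} (m : Fin d → ℤ) (N N' : ℤ) (lam mu : Fin d → List ℕ) (hN : N ≤ N')
    (h : ∀ a, ((lam a).length : ℤ) ≤ N + m a) (h' : ∀ a, ((mu a).length : ℤ) ≤ N + m a) :
    contN m N' lam = contN m N' mu ↔ contN m N lam = contN m N mu := by
  obtain ⟨n, rfl⟩ := Int.le.dest hN
  exact contN_add_iff m N lam mu h h' n

theorem contN_card {d : ℕ} (m : Fin d → ℤ) (N : ℤ) (lam : Fin d → List ℕ)
    (h : ∀ a, ((lam a).length : ℤ) ≤ N + m a) :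
    ((contN m N lam).card : ℤ) = d * N + ∑ a, m a := by
  unfold contN
  rw [Multiset.card_sum]
  push_cast
  have : ∀ a : Fin d, ((Multiset.card (rowL (N + m a).toNat (lam a) : Multiset ℕ) : ℕ) : ℤ)
      = N + m a := by
    intro a
    have := h a
    rw [Multiset.coe_card, rowL_length _ _ (by omega)]
    omega
  rw [Finset.sum_congr rfl fun a _ => this a, Finset.sum_add_distrib]
  simp

theorem chargedHeight_le_of_contN {d : ℕ} [NeZero d] (m : Fin d → ℤ) (lam mu : Fin d → List ℕ)
    (hl : ∀ a, IsPartitionList (lam a)) (hm : ∀ a, IsPartitionList (mu a)) (N : ℤ)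
    (h1 : chargedHeight m lam ≤ N) (h2 : chargedHeight m mu ≤ N)
    (e : contN m N lam = contN m N mu) : chargedHeight m mu ≤ chargedHeight m lam := by
  by_contra hlt
  push Not at hlt
  have hL := le_chargedHeight m lam
  have hM := le_chargedHeight m mu
  rw [contN_le_iff m _ N lam mu h2 (fun a => by have := hL a; omega) hM] at e
  obtain ⟨b, -, hb⟩ := Finset.exists_mem_eq_sup' Finset.univ_nonempty
    (fun a => ((mu a).length : ℤ) - m a)
  change chargedHeight m mu = _ at hb
  have := congrArg (Multiset.count 0) e
  unfold contN at this
  rw [Multiset.count_sum', Multiset.count_sum'] at this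
  refine absurd this.symm (ne_of_lt (Finset.sum_lt_sum ?_ ⟨b, Finset.mem_univ b, ?_⟩))
  · intro a _
    have := hL a
    have := hM a
    rw [rowL_count_zero _ _ (hl a).2 (by omega), rowL_count_zero _ _ (hm a).2 (by omega),
      if_pos (show (lam a).length < _ by omega)]
    split_ifs <;> omega
  · have := hL b
    have := hM b
    rw [rowL_count_zero _ _ (hl b).2 (by omega), rowL_count_zero _ _ (hm b).2 (by omega),
      if_pos (show (lam b).length < _ by omega), if_neg (by omega)]
    omega

theorem chargedContent_iff {d : ℕ} [NeZero d] (m : Fin d → ℤ) (lam mu : Fin d → List ℕ)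
    (hl : ∀ a, IsPartitionList (lam a)) (hm : ∀ a, IsPartitionList (mu a)) (N : ℤ)
    (h1 : ∀ a, ((lam a).length : ℤ) ≤ N + m a) (h2 : ∀ a, ((mu a).length : ℤ) ≤ N + m a) :
    chargedContent m lam = chargedContent m mu ↔ contN m N lam = contN m N mu := by
  have h1' := chargedHeight_le m lam N h1
  have h2' := chargedHeight_le m mu N h2
  have hL := le_chargedHeight m lam
  have hM := le_chargedHeight m mu
  rw [chargedContent_eq, chargedContent_eq]
  have key : chargedHeight m lam = chargedHeight m mu →
      (contN m (chargedHeight m lam) lam = contN m (chargedHeight m mu) mu ↔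
        contN m N lam = contN m N mu) := by
    intro he
    rw [← he] at hM ⊢
    exact (contN_le_iff m _ N lam mu h1' hL hM).symm
  constructor
  · intro e
    refine (key ?_).1 e
    have := congrArg (fun s => (Multiset.card s : ℤ)) e
    simp only [contN_card m _ _ hL, contN_card m _ _ hM] at this
    have hd : (d : ℤ) ≠ 0 := by exact_mod_cast NeZero.ne d
    exact mul_left_cancel₀ hd (add_right_cancel this)
  · intro e
    exact (key (le_antisymm (chargedHeight_le_of_contN m mu lam hm hl N h2' h1' e.symm)
      (chargedHeight_le_of_contN m lam mu hl hm N h1' h2' e))).2 e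

theorem pair_iff {d : ℕ} (m : Fin d → ℤ) (lam mu : Fin d → List ℕ)
    (hl : ∀ a, IsPartitionList (lam a)) (hm : ∀ a, IsPartitionList (mu a)) (N : ℤ)
    (h1 : ∀ a, ((lam a).length : ℤ) ≤ N + m a) (h2 : ∀ a, ((mu a).length : ℤ) ≤ N + m a)
    (s t : Fin d) :
    chargedContent ![m s, m t] ![lam s, lam t] = chargedContent ![m s, m t] ![mu s, mu t] ↔
    (rowL (N + m s).toNat (lam s) : Multiset ℕ) + (rowL (N + m t).toNat (lam t) : Multiset ℕ) =
    (rowL (N + m s).toNat (mu s) : Multiset ℕ) + (rowL (N + m t).toNat (mu t) : Multiset ℕ) := by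
  rw [chargedContent_iff ![m s, m t] ![lam s, lam t] ![mu s, mu t] _ _ N]
  · unfold contN
    rw [Fin.sum_univ_two, Fin.sum_univ_two]
    rfl
  · intro a; fin_cases a
    · exact h1 s
    · exact h1 t
  · intro a; fin_cases a
    · exact h2 s
    · exact h2 t
  · intro a; fin_cases a
    · exact hl s
    · exact hl t
  · intro a; fin_cases a
    · exact hm s
    · exact hm t

theorem SimC.content_eq {d : ℕ} [NeZero d] (m : Fin d → ℤ) (lam mu : Fin d → List ℕ)
    (hl : ∀ a, IsPartitionList (lam a)) (hm : ∀ a, IsPartitionList (mu a))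
    (h : SimC m lam mu) : chargedContent m lam = chargedContent m mu := by
  obtain ⟨s, t, hst, hag, e⟩ := h
  have h1 : ∀ a, ((lam a).length : ℤ) ≤ max (chargedHeight m lam) (chargedHeight m mu) + m a :=
    fun a => by have := le_chargedHeight m lam a; omega
  have h2 : ∀ a, ((mu a).length : ℤ) ≤ max (chargedHeight m lam) (chargedHeight m mu) + m a :=
    fun a => by have := le_chargedHeight m mu a; omega
  rw [pair_iff m lam mu hl hm _ h1 h2] at e
  rw [chargedContent_iff m lam mu hl hm _ h1 h2]
  exact sum_two_change _ _ _ s t hst.ne (Finset.mem_univ _) (Finset.mem_univ _)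
    (fun a ha hb => by rw [hag a ha hb]) e

theorem lift_chain {d r : ℕ} [NeZero d] (m : Fin d → ℤ) (N : ℤ) (A B : Fin d → Finset ℕ)
    (hAB : Relation.ReflTransGen RowStep A B) (mu : Fin d → List ℕ)
    (hmu : IsMultipartitionOf d r mu) (hmuN : ∀ a, ((mu a).length : ℤ) ≤ N + m a)
    (hmuB : ∀ a, (rowL (N + m a).toNat (mu a) : Multiset ℕ) = (B a).val) :
    ∀ lam : Fin d → List ℕ, IsMultipartitionOf d r lam →
      (∀ a, ((lam a).length : ℤ) ≤ N + m a) →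
      (∀ a, (rowL (N + m a).toNat (lam a) : Multiset ℕ) = (A a).val) →
      Relation.ReflTransGen
        (fun x y => IsMultipartitionOf d r x ∧ IsMultipartitionOf d r y ∧ SimC m x y) lam mu := by
  induction hAB using Relation.ReflTransGen.head_induction_on with
  | refl =>
    intro lam hlam hN hA
    have : lam = mu := by
      funext a
      have := hN a
      have := hmuN a
      exact rowL_inj (N + m a).toNat _ _ (hlam.1 a) (hmu.1 a) (by omega) (by omega)
        ((hA a).trans (hmuB a).symm)
    rw [this]
  | @head A A' hstep hrest ih =>
    intro lam hlam hN hA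
    obtain ⟨s, t, hst, hag, hsum, hcard⟩ := hstep
    have hc : ∀ a, (A' a).card = (N + m a).toNat := by
      intro a
      have := hN a
      rw [← hcard a, ← Finset.card_val, ← hA a, Multiset.coe_card, rowL_length _ _ (by omega)]
    choose nu hnu1 hnu2 hnu3 using fun a => rowL_surj (N + m a).toNat (A' a) (hc a)
    have hnuN : ∀ a, ((nu a).length : ℤ) ≤ N + m a := by
      intro a
      have := hN a
      have := hnu2 a
      omega
    have hagree : ∀ a, a ≠ s → a ≠ t → lam a = nu a := by
      intro a h1 h2
      have := hN a
      exact rowL_inj (N + m a).toNat _ _ (hlam.1 a) (hnu1 a) (by omega) (hnu2 a)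
        (by rw [hA, hnu3, hag a h1 h2])
    have hr : ∑ a, (nu a).sum = r := by
      rw [← hlam.2]
      apply Eq.symm
      have hh : ∀ a, (lam a).sum + (rowL (N + m a).toNat []).sum = (A a).val.sum := by
        intro a
        have := hN a
        rw [← rowL_sum _ _ (by omega), ← hA a, Multiset.sum_coe]
      have hh' : ∀ a, (nu a).sum + (rowL (N + m a).toNat []).sum = (A' a).val.sum := by
        intro a
        rw [← rowL_sum _ _ (hnu2 a), ← hnu3 a, Multiset.sum_coe]
      apply sum_two_change _ _ _ s t hst (Finset.mem_univ _) (Finset.mem_univ _)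
        (fun a ha hb => by rw [hagree a ha hb])
      have e := congrArg Multiset.sum hsum
      rw [Multiset.sum_add, Multiset.sum_add] at e
      have := hh s
      have := hh t
      have := hh' s
      have := hh' t
      omega
    have hnu : IsMultipartitionOf d r nu := ⟨hnu1, hr⟩
    refine Relation.ReflTransGen.head ⟨hlam, hnu, ?_⟩ (ih nu hnu hnuN hnu3)
    rcases lt_or_gt_of_ne hst with h | h
    · refine ⟨s, t, h, hagree, ?_⟩
      rw [pair_iff m lam nu hlam.1 hnu1 N hN hnuN, hA, hA, hnu3, hnu3, hsum]
    · refine ⟨t, s, h, fun a h1 h2 => hagree a h2 h1, ?_⟩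
      rw [pair_iff m lam nu hlam.1 hnu1 N hN hnuN, hA, hA, hnu3, hnu3, add_comm, hsum, add_comm]

theorem rowL_nodup (k : ℕ) (l : List ℕ) (h : IsPartitionList l) (hk : l.length ≤ k) :
    (rowL k l : Multiset ℕ).Nodup := by
  rw [Multiset.coe_nodup]
  exact (rowL_sorted k l h hk).imp fun h => ne_of_gt h

/-- Let `d ≥ 2`, let `m ∈ ℤ^d` be a weight system, and let `λ, μ` be
`d`-partitions of `r`. Then `Contc_λ = Contc_μ` as multisets if and only if there is a finite
sequence `λ_(0) = λ, λ_(1), …, λ_(n) = μ` of `d`-partitions of `r` with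
`λ_(i-1) ∼_C λ_(i)` for all `1 ≤ i ≤ n`. -/
theorem chargedContent_eq_iff_simC_chain (d r : ℕ) (hd : 2 ≤ d) [NeZero d] (m : Fin d → ℤ)
    (lam mu : Fin d → List ℕ)
    (hlam : IsMultipartitionOf d r lam) (hmu : IsMultipartitionOf d r mu) :
    chargedContent m lam = chargedContent m mu ↔
      ∃ (n : ℕ) (c : ℕ → Fin d → List ℕ),
        c 0 = lam ∧ c n = mu ∧ (∀ i ≤ n, IsMultipartitionOf d r (c i)) ∧
        ∀ i < n, SimC m (c i) (c (i + 1)) := by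
  constructor
  · intro e
    have h1 : ∀ a, ((lam a).length : ℤ) ≤ max (chargedHeight m lam) (chargedHeight m mu) + m a :=
      fun a => by have := le_chargedHeight m lam a; omega
    have h2 : ∀ a, ((mu a).length : ℤ) ≤ max (chargedHeight m lam) (chargedHeight m mu) + m a :=
      fun a => by have := le_chargedHeight m mu a; omega
    generalize max (chargedHeight m lam) (chargedHeight m mu) = N at h1 h2
    rw [chargedContent_iff m lam mu hlam.1 hmu.1 N h1 h2] at e
    have hconn := rowStep_connected Finset.univ
      (fun a => (⟨rowL (N + m a).toNat (lam a), rowL_nodup _ _ (hlam.1 a)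
        (by have := h1 a; omega)⟩ : Finset ℕ))
      (fun a => (⟨rowL (N + m a).toNat (mu a), rowL_nodup _ _ (hmu.1 a)
        (by have := h2 a; omega)⟩ : Finset ℕ))
      (by simp)
      (fun a => by
        have := h1 a
        have := h2 a
        rw [Finset.card_mk, Finset.card_mk, Multiset.coe_card, Multiset.coe_card,
          rowL_length _ _ (by omega), rowL_length _ _ (by omega)])
      e
    have hch := lift_chain m N _ _ hconn mu hmu h2 (fun a => rfl) lam hlam h1 (fun a => rfl)
    clear e hconn h1 h2
    induction hch using Relation.ReflTransGen.head_induction_on with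
    | refl => exact ⟨0, fun _ => mu, rfl, rfl, fun _ _ => hmu, fun i hi => by omega⟩
    | @head x y hxy _ ih =>
      obtain ⟨n, c, hc0, hcn, hc1, hc2⟩ := ih hxy.2.1
      refine ⟨n + 1, fun i => Nat.casesOn i x c, rfl, hcn, ?_, ?_⟩
      · intro i hi
        rcases i with _ | i
        · exact hxy.1
        · exact hc1 i (by omega)
      · intro i hi
        rcases i with _ | i
        · change SimC m x (c 0)
          rw [hc0]
          exact hxy.2.2
        · exact hc2 i (by omega)
  · rintro ⟨n, c, rfl, rfl, hc1, hc2⟩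
    have : ∀ i ≤ n, chargedContent m (c 0) = chargedContent m (c i) := by
      intro i
      induction i with
      | zero => intro _; rfl
      | succ i ih =>
        intro hi
        rw [ih (by omega)]
        exact SimC.content_eq m _ _ (hc1 i (by omega)).1 (hc1 (i + 1) hi).1 (hc2 i (by omega))
    exact this n le_rfl
end
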